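/- Let N ≥ 1, let (c_{jk}) be a complex N×N matrix, let μ, a, b : ℝ → ℂ, let σ_1,…,σ_N ∈ {±1}, let π be an involutive permutation of {1,…,N}, let ε₁, ε₂, κ ∈ {±1}, and let x₀, t₀ ∈ ℝ; write X = ε₁x + x₀, T = ε₂t + t₀. Assume the coefficient conditions ε₂ μ(t) = κ conj(μ(T)), ε₁ a(t) = κ conj(a(T)), ε₁ b(t) = κ conj(b(T)) hold for all t, and the coupling constraint c_{jk} σ_j σ_k = conj(c_{π(j)π(k)}) holds for all j,k. If v_1,…,v_N : ℝ×ℝ → ℂ are three times continuously differentiable and satisfy μ(t) ∂_t v_i + a(t) ∂_x³ v_i + 3 b(t) ρ(x,t) ∂_x v_i = 0 for all i and all (x,t), where ρ(x,t) = Σ_{j,k=1}^N c_{jk} v_j(x,t) v_k(x,t), then the functions w_i(x,t) := σ_i conj(v_{π(i)}(X,T)) also satisfy μ(t) ∂_t w_i + a(t) ∂_x³ w_i + 3 b(t) ρ_w(x,t) ∂_x w_i = 0 for all i and all (x,t), where ρ_w(x,t) = Σ_{j,k=1}^N c_{jk} w_j(x,t) w_k(x,t). -/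

import Mathlib

/-- Partial derivative in the first (space) variable of a complex-valued field. -/
noncomputable def pX (f : ℝ → ℝ → ℂ) : ℝ → ℝ → ℂ :=
  fun x t => deriv (fun x' => f x' t) x

/-- Partial derivative in the second (time) variable of a complex-valued field. -/
noncomputable def pT (f : ℝ → ℝ → ℂ) : ℝ → ℝ → ℂ :=
  fun x t => deriv (fun t' => f x t') t

theorem deriv_reflect (g : ℝ → ℂ) (s : ℂ) (e y x : ℝ) :
    deriv (fun x' => s * (starRingEnd ℂ) (g (e * x' + y))) x =
      (s * (e : ℂ)) * (starRingEnd ℂ) (deriv g (e * x + y)) := by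
  rw [deriv_const_mul_field]
  have h1 : deriv (fun x' => (starRingEnd ℂ) (g (e * x' + y))) x =
      (starRingEnd ℂ) (deriv (fun x' => g (e * x' + y)) x) :=
    deriv.star (f := fun x' => g (e * x' + y)) (x := x)
  have h2 : deriv (fun x' => g (e * x' + y)) x = e • deriv g (e * x + y) := by
    rw [deriv_comp_mul_left e (fun z => g (z + y)) x, deriv_comp_add_const]
  rw [h1, h2, Complex.real_smul, map_mul, Complex.conj_ofReal, mul_assoc]

/-- under the coefficient conditions and the coupling constraint, the
variable-coefficient coupled HI–mKdV system is closed under the shifted nonlocal reduction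
`w_i(x,t) = σ_i conj(v_{π(i)}(ε₁ x + x₀, ε₂ t + t₀))`. -/
theorem shifted_nonlocal_reduction_compatibility {N : ℕ} (hN : 1 ≤ N)
    (c : Fin N → Fin N → ℂ) (μ a b : ℝ → ℂ)
    (σ : Fin N → ℝ) (π : Equiv.Perm (Fin N)) (hπ : ∀ i, π (π i) = i)
    (ε₁ ε₂ κ x₀ t₀ : ℝ)
    (hσ : ∀ i, σ i = 1 ∨ σ i = -1)
    (hε₁ : ε₁ = 1 ∨ ε₁ = -1) (hε₂ : ε₂ = 1 ∨ ε₂ = -1) (hκ : κ = 1 ∨ κ = -1)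
    (hμ : ∀ t : ℝ, (ε₂ : ℂ) * μ t = (κ : ℂ) * (starRingEnd ℂ) (μ (ε₂ * t + t₀)))
    (ha : ∀ t : ℝ, (ε₁ : ℂ) * a t = (κ : ℂ) * (starRingEnd ℂ) (a (ε₂ * t + t₀)))
    (hb : ∀ t : ℝ, (ε₁ : ℂ) * b t = (κ : ℂ) * (starRingEnd ℂ) (b (ε₂ * t + t₀)))
    (hc : ∀ j k, c j k * (σ j : ℂ) * (σ k : ℂ) = (starRingEnd ℂ) (c (π j) (π k)))
    (v : Fin N → ℝ → ℝ → ℂ)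
    (hv : ∀ i, ContDiff ℝ 3 (fun p : ℝ × ℝ => v i p.1 p.2))
    (hsys : ∀ i (x t : ℝ),
      μ t * pT (v i) x t + a t * pX (pX (pX (v i))) x t +
        3 * b t * (∑ j, ∑ k, c j k * v j x t * v k x t) * pX (v i) x t = 0)
    (w : Fin N → ℝ → ℝ → ℂ)
    (hw : ∀ i (x t : ℝ), w i x t =
      (σ i : ℂ) * (starRingEnd ℂ) (v (π i) (ε₁ * x + x₀) (ε₂ * t + t₀))) :
    ∀ i (x t : ℝ),
      μ t * pT (w i) x t + a t * pX (pX (pX (w i))) x t +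
        3 * b t * (∑ j, ∑ k, c j k * w j x t * w k x t) * pX (w i) x t = 0 := by
  intro i x t
  have hwf : w i = fun x t => (σ i : ℂ) *
      (starRingEnd ℂ) (v (π i) (ε₁ * x + x₀) (ε₂ * t + t₀)) := by
    funext x t
    exact hw i x t
  have key : ∀ (s : ℂ) (f : ℝ → ℝ → ℂ),
      pX (fun x t => s * (starRingEnd ℂ) (f (ε₁ * x + x₀) (ε₂ * t + t₀))) =
        fun x t => (s * (ε₁ : ℂ)) *
          (starRingEnd ℂ) (pX f (ε₁ * x + x₀) (ε₂ * t + t₀)) := by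
    intro s f
    funext x t
    exact deriv_reflect (fun z => f z (ε₂ * t + t₀)) s ε₁ x₀ x
  have keyT : pT (w i) x t = ((σ i : ℂ) * (ε₂ : ℂ)) *
      (starRingEnd ℂ) (pT (v (π i)) (ε₁ * x + x₀) (ε₂ * t + t₀)) := by
    rw [hwf]
    exact deriv_reflect (fun z => v (π i) (ε₁ * x + x₀) z) (σ i : ℂ) ε₂ t₀ t
  have hρ : (∑ j, ∑ k, c j k * w j x t * w k x t) =
      (starRingEnd ℂ) (∑ j, ∑ k, c j k * v j (ε₁ * x + x₀) (ε₂ * t + t₀) *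
        v k (ε₁ * x + x₀) (ε₂ * t + t₀)) := by
    rw [← Equiv.sum_comp π, map_sum]
    refine Finset.sum_congr rfl fun j _ => ?_
    rw [← Equiv.sum_comp π, map_sum]
    refine Finset.sum_congr rfl fun k _ => ?_
    have hcc := hc (π j) (π k)
    rw [hπ, hπ] at hcc
    rw [map_mul, map_mul, ← hcc, hw, hw, hπ, hπ]
    ring
  have h0 := congrArg (starRingEnd ℂ) (hsys (π i) (ε₁ * x + x₀) (ε₂ * t + t₀))
  simp only [map_add, map_mul, map_zero, Complex.conj_ofNat] at h0
  rw [keyT, hρ, hwf, key, key, key]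
  have he : (ε₁ : ℂ) * ε₁ = 1 := by
    rcases hε₁ with h | h <;> simp [h]
  simp only [map_sum, map_mul]
  simp only [map_sum, map_mul] at h0
  linear_combination (κ : ℂ) * (σ i : ℂ) * h0
    + (σ i : ℂ) * (starRingEnd ℂ) (pT (v (π i)) (ε₁ * x + x₀) (ε₂ * t + t₀)) * hμ t
    + (σ i : ℂ) * (starRingEnd ℂ) (pX (pX (pX (v (π i)))) (ε₁ * x + x₀) (ε₂ * t + t₀)) * ha t
    + (σ i : ℂ) * (ε₁ : ℂ) * a t *
      (starRingEnd ℂ) (pX (pX (pX (v (π i)))) (ε₁ * x + x₀) (ε₂ * t + t₀)) * he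
    + 3 * (σ i : ℂ) * (∑ j, ∑ k, (starRingEnd ℂ) (c j k) *
        (starRingEnd ℂ) (v j (ε₁ * x + x₀) (ε₂ * t + t₀)) *
        (starRingEnd ℂ) (v k (ε₁ * x + x₀) (ε₂ * t + t₀))) *
      (starRingEnd ℂ) (pX (v (π i)) (ε₁ * x + x₀) (ε₂ * t + t₀)) * hb t
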